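/- arXiv:math/0308016 — 2 statements merged into one kernel-verified Lean document; each statement's English description precedes it below -/
import Mathlib

section
/- For every λ ∈ K: the kernel of the even part of D(−1) is 3-dimensional, spanned by E1, E3 and mE4 − E5; and the kernel of the odd part of D(−1) is spanned by O2, together with O1 exactly when λ = −(m+1), and together with O3 exactly when λ = −1. In particular, if λ is not a negative integer, the cohomology H¹(d_λ) has dimension 3 in the even part and 1 in the odd part. -/
namespace LinfCohomology

variable {K : Type*} [Field K] [CharZero K]

/- Cochain conventions: for `n ≥ 0`, the even part of `C(n)` has coordinates
`E1,…,E6` (for `φ^{1,0,n+1}_1, φ^{1,0,n+1}_2, φ^{0,1,n+1}_1, φ^{0,1,n+1}_2,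
φ^{0,0,n+2}_3, φ^{1,1,n}_3`) and the odd part has coordinates `O1,…,O6` (for
`ψ^{1,0,n+1}_3, ψ^{0,1,n+1}_3, ψ^{0,0,n+2}_1, ψ^{0,0,n+2}_2, ψ^{1,1,n}_1,
ψ^{1,1,n}_2`); `C(-1)` has even coordinates `E1,…,E5` and odd `O1,…,O4`. -/

/-- The even part of the coboundary operator `D(n)` of
`d_λ = ψ^{0,1,m+1}_3 + λψ^{1,1,m}_1`, for `n ≥ 0`:
`E1 ↦ -(n+1)O5`, `E2 ↦ -O1+(λ-n-1)O6`, `E3 ↦ 0`, `E4 ↦ -O2-λO5`,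
`E5 ↦ (n+1-m)O2-λmO5`, `E6 ↦ 0`. -/
def De (m : ℕ) (lam : K) (n : ℕ) : (Fin 6 → K) →ₗ[K] (Fin 6 → K) :=
  Matrix.mulVecLin
    !![0, -1, 0, 0, 0, 0;
       0, 0, 0, -1, (n : K) + 1 - (m : K), 0;
       0, 0, 0, 0, 0, 0;
       0, 0, 0, 0, 0, 0;
       -((n : K) + 1), 0, 0, -lam, -(lam * (m : K)), 0;
       0, lam - (n : K) - 1, 0, 0, 0, 0]

/-- The odd part of the coboundary operator `D(n)` of `d_λ`, for `n ≥ 0`: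
`O1 ↦ (λ+m-n)E6`, `O2 ↦ 0`, `O3 ↦ (λ+n+2)E3`, `O4 ↦ -λE1+(n+2)E4+E5`,
`O5 ↦ 0`, `O6 ↦ E6`. -/
def Do (m : ℕ) (lam : K) (n : ℕ) : (Fin 6 → K) →ₗ[K] (Fin 6 → K) :=
  Matrix.mulVecLin
    !![0, 0, 0, -lam, 0, 0;
       0, 0, 0, 0, 0, 0;
       0, 0, lam + (n : K) + 2, 0, 0, 0;
       0, 0, 0, (n : K) + 2, 0, 0;
       0, 0, 0, 1, 0, 0;
       lam + (m : K) - (n : K), 0, 0, 0, 0, 1]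

/-- The even part of `D(-1)` of `d_λ` (on degree-1 cochains):
`E1 ↦ 0`, `E2 ↦ -O1+λO6`, `E3 ↦ 0`, `E4 ↦ -O2-λO5`, `E5 ↦ -mO2-λmO5`. -/
def DeNeg1 (m : ℕ) (lam : K) : (Fin 5 → K) →ₗ[K] (Fin 6 → K) :=
  Matrix.mulVecLin
    !![0, -1, 0, 0, 0;
       0, 0, 0, -1, -(m : K);
       0, 0, 0, 0, 0;
       0, 0, 0, 0, 0;
       0, 0, 0, -lam, -(lam * (m : K));
       0, lam, 0, 0, 0]

/-- The odd part of `D(-1)` of `d_λ` (on degree-1 cochains):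
`O1 ↦ (λ+m+1)E6`, `O2 ↦ 0`, `O3 ↦ (λ+1)E3`, `O4 ↦ -λE1+E4+E5`. -/
def DoNeg1 (m : ℕ) (lam : K) : (Fin 4 → K) →ₗ[K] (Fin 6 → K) :=
  Matrix.mulVecLin
    !![0, 0, 0, -lam;
       0, 0, 0, 0;
       0, 0, lam + 1, 0;
       0, 0, 0, 1;
       0, 0, 0, 1;
       lam + (m : K) + 1, 0, 0, 0]

/-!
The even kernel is cut out by `x 1 = 0` and `x 3 + m * x 4 = 0`, whatever `λ` is. The odd kernel is
cut out by `x 3 = 0`, `(λ + m + 1) * x 0 = 0` and `(λ + 1) * x 2 = 0`, where each of the last two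
equations is either vacuous or kills its coordinate. It is therefore a coordinate subspace, and its
dimension is the number of surviving coordinates.
-/

theorem image_setOf_and_eq {α β : Type*} (f : α → β) (p : Prop) (a : α) :
    f '' {x | p ∧ x = a} = {y | p ∧ y = f a} := by
  by_cases hp : p <;> simp [hp]

theorem ncard_setOf_and_eq {α : Type*} (p : Prop) [Decidable p] (a : α) :
    {x | p ∧ x = a}.ncard = if p then 1 else 0 := by
  split_ifs with hp <;> simp [hp]

section

omit [CharZero K]

theorem DeNeg1_apply (m : ℕ) (lam : K) (x : Fin 5 → K) :
    DeNeg1 m lam x =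
      ![-x 1, -(x 3 + m * x 4), 0, 0, -(lam * (x 3 + m * x 4)), lam * x 1] := by
  ext i
  fin_cases i <;>
    simp [DeNeg1, Matrix.mulVec, dotProduct, Fin.sum_univ_succ, mul_add, mul_assoc, add_comm]

theorem DoNeg1_apply (m : ℕ) (lam : K) (x : Fin 4 → K) :
    DoNeg1 m lam x =
      ![-(lam * x 3), 0, (lam + 1) * x 2, x 3, x 3, (lam + (m + 1)) * x 0] := by
  ext i
  fin_cases i <;>
    simp [DoNeg1, Matrix.mulVec, dotProduct, Fin.sum_univ_succ, add_assoc]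

theorem mem_ker_DeNeg1 {m : ℕ} {lam : K} {x : Fin 5 → K} :
    x ∈ LinearMap.ker (DeNeg1 m lam) ↔ x 1 = 0 ∧ x 3 + m * x 4 = 0 := by
  rw [LinearMap.mem_ker, DeNeg1_apply]
  constructor
  · intro h
    exact ⟨neg_eq_zero.1 (congrFun h 0), neg_eq_zero.1 (congrFun h 1)⟩
  · rintro ⟨h₁, h₃⟩
    simp only [h₁, h₃, mul_zero, neg_zero, Matrix.cons_eq_zero_iff, Matrix.zero_empty, and_self]

theorem mem_ker_DoNeg1 {m : ℕ} {lam : K} {x : Fin 4 → K} :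
    x ∈ LinearMap.ker (DoNeg1 m lam) ↔
      (lam = -((m : K) + 1) ∨ x 0 = 0) ∧ (lam = -1 ∨ x 2 = 0) ∧ x 3 = 0 := by
  rw [LinearMap.mem_ker, DoNeg1_apply, eq_neg_iff_add_eq_zero, eq_neg_iff_add_eq_zero,
    ← mul_eq_zero, ← mul_eq_zero]
  constructor
  · intro h
    exact ⟨congrFun h 5, congrFun h 2, congrFun h 3⟩
  · rintro ⟨h₀, h₂, h₃⟩
    simp only [h₀, h₂, h₃, mul_zero, neg_zero, Matrix.cons_eq_zero_iff, Matrix.zero_empty, and_self]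

theorem ker_DeNeg1 (m : ℕ) (lam : K) :
    LinearMap.ker (DeNeg1 m lam) =
      Submodule.span K {(![1, 0, 0, 0, 0] : Fin 5 → K),
        ![0, 0, 1, 0, 0], ![0, 0, 0, (m : K), -1]} := by
  ext x
  rw [mem_ker_DeNeg1, Submodule.mem_span_triple]
  constructor
  · rintro ⟨h₁, h₃⟩
    refine ⟨x 0, x 2, -x 4, ?_⟩
    ext i
    fin_cases i <;> simp [h₁, eq_neg_of_add_eq_zero_left h₃, mul_comm]
  · rintro ⟨a, b, c, rfl⟩
    simp [mul_comm]

theorem linearIndependent_ker_DeNeg1_generators (m : ℕ) :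
    LinearIndependent K
      ![(![1, 0, 0, 0, 0] : Fin 5 → K), ![0, 0, 1, 0, 0], ![0, 0, 0, (m : K), -1]] := by
  rw [Fintype.linearIndependent_iff]
  intro c hc
  have h₀ : c 0 = 0 := by simpa [Fin.sum_univ_succ] using congrFun hc 0
  have h₁ : c 1 = 0 := by simpa [Fin.sum_univ_succ] using congrFun hc 2
  have h₂ : c 2 = 0 := by simpa [Fin.sum_univ_succ] using congrFun hc 4
  simp [Fin.forall_fin_succ, h₀, h₁, h₂]

theorem finrank_ker_DeNeg1 (m : ℕ) (lam : K) :
    Module.finrank K (LinearMap.ker (DeNeg1 m lam)) = 3 := by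
  have hspan := finrank_span_eq_card (linearIndependent_ker_DeNeg1_generators (K := K) m)
  rwa [Matrix.range_cons, Matrix.range_cons_cons_empty, Set.singleton_union, ← ker_DeNeg1 m lam,
    Fintype.card_fin] at hspan

/-- The indices of the odd coordinates of `C(-1)` that are unconstrained on the kernel of the odd
part of `D(-1)`. Indices start at `0`, so that `i` stands for the coordinate `O(i+1)`. -/
def oddCocycleCoords (m : ℕ) (lam : K) : Set (Fin 4) :=
  {1} ∪ {i | lam = -((m : K) + 1) ∧ i = 0} ∪ {i | lam = -1 ∧ i = 2}

theorem ker_DoNeg1_eq_spanSubset (m : ℕ) (lam : K) :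
    LinearMap.ker (DoNeg1 m lam) = Pi.spanSubset K (oddCocycleCoords m lam) := by
  ext x
  rw [mem_ker_DoNeg1, Pi.mem_spanSubset_iff]
  simp [Fin.forall_fin_succ, oddCocycleCoords, or_iff_not_imp_left]

theorem basisFun_image_oddCocycleCoords (m : ℕ) (lam : K) :
    Pi.basisFun K (Fin 4) '' oddCocycleCoords m lam =
      {(![0, 1, 0, 0] : Fin 4 → K)} ∪
        {x : Fin 4 → K | lam = -((m : K) + 1) ∧ x = ![1, 0, 0, 0]} ∪
        {x : Fin 4 → K | lam = -1 ∧ x = ![0, 0, 1, 0]} := by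
  have h₀ : Pi.basisFun K (Fin 4) 0 = ![1, 0, 0, 0] := by ext i; fin_cases i <;> simp
  have h₁ : Pi.basisFun K (Fin 4) 1 = ![0, 1, 0, 0] := by ext i; fin_cases i <;> simp
  have h₂ : Pi.basisFun K (Fin 4) 2 = ![0, 0, 1, 0] := by ext i; fin_cases i <;> simp
  rw [oddCocycleCoords, Set.image_union, Set.image_union, Set.image_singleton,
    image_setOf_and_eq, image_setOf_and_eq, h₀, h₁, h₂]

theorem ker_DoNeg1 (m : ℕ) (lam : K) :
    LinearMap.ker (DoNeg1 m lam) =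
      Submodule.span K ({(![0, 1, 0, 0] : Fin 4 → K)} ∪
        {x : Fin 4 → K | lam = -((m : K) + 1) ∧ x = ![1, 0, 0, 0]} ∪
        {x : Fin 4 → K | lam = -1 ∧ x = ![0, 0, 1, 0]}) := by
  rw [ker_DoNeg1_eq_spanSubset, Pi.spanSubset, basisFun_image_oddCocycleCoords]

theorem ncard_oddCocycleCoords [DecidableEq K] (m : ℕ) (lam : K) :
    (oddCocycleCoords m lam).ncard =
      1 + (if lam = -((m : K) + 1) then 1 else 0) + (if lam = -1 then 1 else 0) := by
  rw [oddCocycleCoords, Set.ncard_union_eq, Set.ncard_union_eq, Set.ncard_singleton,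
    ncard_setOf_and_eq, ncard_setOf_and_eq]
  · exact Set.disjoint_left.2 (by simp)
  · exact Set.disjoint_left.2 (by simp +contextual)

theorem finrank_ker_DoNeg1 [DecidableEq K] (m : ℕ) (lam : K) :
    Module.finrank K (LinearMap.ker (DoNeg1 m lam)) =
      1 + (if lam = -((m : K) + 1) then 1 else 0) + (if lam = -1 then 1 else 0) := by
  rw [ker_DoNeg1_eq_spanSubset, Pi.dim_spanSubset, ncard_oddCocycleCoords]

theorem dLam_H1_general [DecidableEq K] (m : ℕ) (lam : K) :
    (LinearMap.ker (DeNeg1 m lam) =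
        Submodule.span K {(![1, 0, 0, 0, 0] : Fin 5 → K),
          ![0, 0, 1, 0, 0], ![0, 0, 0, (m : K), -1]} ∧
      Module.finrank K (LinearMap.ker (DeNeg1 m lam)) = 3) ∧
    LinearMap.ker (DoNeg1 m lam) =
      Submodule.span K ({(![0, 1, 0, 0] : Fin 4 → K)} ∪
        {x : Fin 4 → K | lam = -((m : K) + 1) ∧ x = ![1, 0, 0, 0]} ∪
        {x : Fin 4 → K | lam = -1 ∧ x = ![0, 0, 1, 0]}) ∧
    Module.finrank K (LinearMap.ker (DoNeg1 m lam)) =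
      1 + (if lam = -((m : K) + 1) then 1 else 0) + (if lam = -1 then 1 else 0) :=
  ⟨⟨ker_DeNeg1 m lam, finrank_ker_DeNeg1 m lam⟩, ker_DoNeg1 m lam, finrank_ker_DoNeg1 m lam⟩

end

/-- For every `λ ∈ K`: the kernel of the even part of `D(-1)` is 3-dimensional,
spanned by `E1`, `E3` and `mE4 - E5`; the kernel of the odd part of `D(-1)` is
spanned by `O2`, together with `O1` exactly when `λ = -(m+1)` and together with
`O3` exactly when `λ = -1`. In particular, if `λ` is not a negative integer then
`H¹(d_λ)` has dimension `3` in the even part and `1` in the odd part. -/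
theorem dLam_H1 (m : ℕ) (lam : K) :
    (LinearMap.ker (DeNeg1 m lam) =
        Submodule.span K {(![1, 0, 0, 0, 0] : Fin 5 → K),
          ![0, 0, 1, 0, 0], ![0, 0, 0, (m : K), -1]} ∧
      Module.finrank K (LinearMap.ker (DeNeg1 m lam)) = 3) ∧
    (LinearMap.ker (DoNeg1 m lam) =
      Submodule.span K ({(![0, 1, 0, 0] : Fin 4 → K)} ∪
        {x : Fin 4 → K | lam = -((m : K) + 1) ∧ x = ![1, 0, 0, 0]} ∪
        {x : Fin 4 → K | lam = -1 ∧ x = ![0, 0, 1, 0]})) ∧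
    ((∀ p : ℕ, 0 < p → lam ≠ -(p : K)) →
      Module.finrank K (LinearMap.ker (DeNeg1 m lam)) = 3 ∧
      Module.finrank K (LinearMap.ker (DoNeg1 m lam)) = 1) := by
  classical
  obtain ⟨heven, hodd, hdim⟩ := dLam_H1_general m lam
  refine ⟨heven, hodd, fun h => ⟨heven.2, ?_⟩⟩
  rw [hdim, if_neg (mod_cast h (m + 1) m.succ_pos), if_neg (mod_cast h 1 one_pos)]

end LinfCohomology
end

section
/- For every integer n > m, the kernel of D(n) equals the image of D(n−m−1) on both the even and the odd parts, so H^{n+2}(d_*) = 0 for all n > m. For n = m: the image under D(−1) of the odd part of C(−1) is spanned by (m+2)E1 + E5 and E3 and has codimension 1 in the kernel of the even part of D(m), with complement spanned by E4; and the image under D(−1) of the even part of C(−1) is spanned by O3 and O4 and has codimension 1 in the kernel of the odd part of D(m), with complement spanned by O2 − (m+2)O5. That is, H^{m+2}(d_*) has dimension 1|1, with representatives φ^{0,1,m+1}_2 and ψ^{0,1,m+1}_3 − (m+2)ψ^{1,1,m}_1. -/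
namespace LinfCohomology

/- Cochain conventions: for `n ≥ 0`, the even part of `C(n)` has coordinates
`E1,…,E6` (for `φ^{1,0,n+1}_1, φ^{1,0,n+1}_2, φ^{0,1,n+1}_1, φ^{0,1,n+1}_2,
φ^{0,0,n+2}_3, φ^{1,1,n}_3`) and the odd part has coordinates `O1,…,O6` (for
`ψ^{1,0,n+1}_3, ψ^{0,1,n+1}_3, ψ^{0,0,n+2}_1, ψ^{0,0,n+2}_2, ψ^{1,1,n}_1,
ψ^{1,1,n}_2`); `C(-1)` has even coordinates `E1,…,E5` and odd `O1,…,O4`. -/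

/-- The even part of the coboundary operator `D(n)` of `d_* = ψ^{0,0,m+2}_1`, for
`n ≥ 0`: `E1 ↦ O3`, `E2 ↦ O4`, `E3 ↦ 0`, `E4 ↦ 0`, `E5 ↦ -(m+2)O3`,
`E6 ↦ O2-(m+2)O5`. -/
def DeStar (K : Type*) [Field K] (m : ℕ) (_n : ℕ) :
    (Fin 6 → K) →ₗ[K] (Fin 6 → K) :=
  Matrix.mulVecLin
    !![0, 0, 0, 0, 0, 0;
       0, 0, 0, 0, 0, 1;
       1, 0, 0, 0, -((m : K) + 2), 0;
       0, 1, 0, 0, 0, 0;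
       0, 0, 0, 0, 0, -((m : K) + 2);
       0, 0, 0, 0, 0, 0]

/-- The odd part of the coboundary operator `D(n)` of `d_*`, for `n ≥ 0`:
`O1 ↦ (m+2)E1+E5`, `O2 ↦ (m+2)E3`, `O3 ↦ 0`, `O4 ↦ 0`, `O5 ↦ E3`, `O6 ↦ E4`. -/
def DoStar (K : Type*) [Field K] (m : ℕ) (_n : ℕ) :
    (Fin 6 → K) →ₗ[K] (Fin 6 → K) :=
  Matrix.mulVecLin
    !![(m : K) + 2, 0, 0, 0, 0, 0;
       0, 0, 0, 0, 0, 0;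
       0, (m : K) + 2, 0, 0, 1, 0;
       0, 0, 0, 0, 0, 1;
       1, 0, 0, 0, 0, 0;
       0, 0, 0, 0, 0, 0]

/-- The even part of `D(-1)` of `d_*`: `E1 ↦ O3`, `E2 ↦ O4`, `E5 ↦ -(m+2)O3`. -/
def DeStarNeg1 (K : Type*) [Field K] (m : ℕ) : (Fin 5 → K) →ₗ[K] (Fin 6 → K) :=
  Matrix.mulVecLin
    !![0, 0, 0, 0, 0;
       0, 0, 0, 0, 0;
       1, 0, 0, 0, -((m : K) + 2);
       0, 1, 0, 0, 0;
       0, 0, 0, 0, 0;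
       0, 0, 0, 0, 0]

/-- The odd part of `D(-1)` of `d_*`: `O1 ↦ (m+2)E1+E5`, `O2 ↦ (m+2)E3`. -/
def DoStarNeg1 (K : Type*) [Field K] (m : ℕ) : (Fin 4 → K) →ₗ[K] (Fin 6 → K) :=
  Matrix.mulVecLin
    !![(m : K) + 2, 0, 0, 0;
       0, 0, 0, 0;
       0, (m : K) + 2, 0, 0;
       0, 0, 0, 0;
       1, 0, 0, 0;
       0, 0, 0, 0]

/-!
Away from the initial term the complex of `d_*` is contractible: each generator `E1`, `E2`, `E6`
is matched with the leading term `O3`, `O4`, `O2` of its coboundary, and each of `O1`, `O5`, `O6`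
with `E5`, `E3`, `E4`. Undoing this matching gives a contracting homotopy. The truncated space
`C(-1)` lacks `E6`, `O5` and `O6`. As `D(O2) = (m+2)E3` and `m + 2` is invertible, losing `O5`
costs nothing in the image, so the only classes which appear in degree `m + 2` are those of
`D(O6) = E4` and `D(E6) = O2-(m+2)O5`.
-/

theorem exact_of_homotopy {R M N P : Type*} [Semiring R] [AddCommMonoid M] [AddCommMonoid N]
    [AddCommMonoid P] [Module R M] [Module R N] [Module R P] {f : M →ₗ[R] N} {g : N →ₗ[R] P}
    (s : N →ₗ[R] M) (t : P →ₗ[R] N) (hgf : g ∘ₗ f = 0)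
    (hst : f ∘ₗ s + t ∘ₗ g = LinearMap.id) : Function.Exact f g := by
  refine Function.Exact.of_comp_of_mem_range (congrArg DFunLike.coe hgf) fun y hy => ⟨s y, ?_⟩
  simpa [hy] using LinearMap.congr_fun hst y

/-- The even part of the contracting homotopy of the complex of `d_*`:
`E3 ↦ O5`, `E4 ↦ O6`, `E5 ↦ O1`, and the other `Ei ↦ 0`. -/
def homotopyEven (K : Type*) [Field K] : (Fin 6 → K) →ₗ[K] (Fin 6 → K) :=
  Matrix.mulVecLin
    !![0, 0, 0, 0, 1, 0;
       0, 0, 0, 0, 0, 0;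
       0, 0, 0, 0, 0, 0;
       0, 0, 0, 0, 0, 0;
       0, 0, 1, 0, 0, 0;
       0, 0, 0, 1, 0, 0]

/-- The odd part of the contracting homotopy of the complex of `d_*`:
`O2 ↦ E6`, `O3 ↦ E1`, `O4 ↦ E2`, and the other `Oi ↦ 0`. -/
def homotopyOdd (K : Type*) [Field K] : (Fin 6 → K) →ₗ[K] (Fin 6 → K) :=
  Matrix.mulVecLin
    !![0, 0, 1, 0, 0, 0;
       0, 0, 0, 1, 0, 0;
       0, 0, 0, 0, 0, 0;
       0, 0, 0, 0, 0, 0;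
       0, 0, 0, 0, 0, 0;
       0, 1, 0, 0, 0, 0]

section Coboundary

variable {K : Type*} [Field K] {m : ℕ} (k n : ℕ)

theorem homotopyEven_apply (x : Fin 6 → K) : homotopyEven K x = ![x 4, 0, 0, 0, x 2, x 3] := by
  ext i
  fin_cases i <;> simp [homotopyEven, Matrix.mulVec, dotProduct, Fin.sum_univ_succ]

theorem homotopyOdd_apply (y : Fin 6 → K) : homotopyOdd K y = ![y 2, y 3, 0, 0, 0, y 1] := by
  ext i
  fin_cases i <;> simp [homotopyOdd, Matrix.mulVec, dotProduct, Fin.sum_univ_succ]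

theorem DeStar_apply (x : Fin 6 → K) :
    DeStar K m n x = (x 0 - ((m : K) + 2) * x 4) • ![0, 0, 1, 0, 0, 0] +
      x 1 • ![0, 0, 0, 1, 0, 0] + x 5 • ![0, 1, 0, 0, -((m : K) + 2), 0] := by
  ext i
  fin_cases i <;>
    simp [DeStar, Matrix.mulVec, dotProduct, Fin.sum_univ_succ, sub_eq_add_neg, mul_comm,
      -neg_add_rev]

theorem DoStar_apply (y : Fin 6 → K) :
    DoStar K m n y = y 0 • ![(m : K) + 2, 0, 0, 0, 1, 0] +
      (((m : K) + 2) * y 1 + y 4) • ![0, 0, 1, 0, 0, 0] + y 5 • ![0, 0, 0, 1, 0, 0] := by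
  ext i
  fin_cases i <;> simp [DoStar, Matrix.mulVec, dotProduct, Fin.sum_univ_succ, mul_comm]

theorem DeStarNeg1_apply (x : Fin 5 → K) :
    DeStarNeg1 K m x = (x 0 - ((m : K) + 2) * x 4) • ![0, 0, 1, 0, 0, 0] +
      x 1 • ![0, 0, 0, 1, 0, 0] := by
  ext i
  fin_cases i <;>
    simp [DeStarNeg1, Matrix.mulVec, dotProduct, Fin.sum_univ_succ, sub_eq_add_neg, mul_comm,
      -neg_add_rev]

theorem DoStarNeg1_apply (y : Fin 4 → K) :
    DoStarNeg1 K m y = y 0 • ![(m : K) + 2, 0, 0, 0, 1, 0] +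
      (((m : K) + 2) * y 1) • ![0, 0, 1, 0, 0, 0] := by
  ext i
  fin_cases i <;> simp [DoStarNeg1, Matrix.mulVec, dotProduct, Fin.sum_univ_succ, mul_comm]

theorem DeStar_comp_DoStar : DeStar K m n ∘ₗ DoStar K m k = 0 := by
  refine LinearMap.ext fun y => ?_
  simp [DeStar_apply, DoStar_apply, mul_comm]

theorem DoStar_comp_DeStar : DoStar K m n ∘ₗ DeStar K m k = 0 := by
  refine LinearMap.ext fun x => ?_
  simp [DeStar_apply, DoStar_apply, mul_comm, -neg_add_rev]

theorem DoStar_homotopyEven_add_homotopyOdd_DeStar :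
    DoStar K m k ∘ₗ homotopyEven K + homotopyOdd K ∘ₗ DeStar K m n = LinearMap.id := by
  refine LinearMap.ext fun x => ?_
  ext i
  fin_cases i <;> simp [DeStar_apply, DoStar_apply, homotopyEven_apply, homotopyOdd_apply, mul_comm]

theorem DeStar_homotopyOdd_add_homotopyEven_DoStar :
    DeStar K m k ∘ₗ homotopyOdd K + homotopyEven K ∘ₗ DoStar K m n = LinearMap.id := by
  refine LinearMap.ext fun y => ?_
  ext i
  fin_cases i <;>
    simp [DeStar_apply, DoStar_apply, homotopyEven_apply, homotopyOdd_apply, mul_comm,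
      -neg_add_rev]

theorem exact_DoStar_DeStar : Function.Exact (DoStar K m k) (DeStar K m n) :=
  exact_of_homotopy (homotopyEven K) (homotopyOdd K) (DeStar_comp_DoStar k n)
    (DoStar_homotopyEven_add_homotopyOdd_DeStar k n)

theorem exact_DeStar_DoStar : Function.Exact (DeStar K m k) (DoStar K m n) :=
  exact_of_homotopy (homotopyOdd K) (homotopyEven K) (DoStar_comp_DeStar k n)
    (DeStar_homotopyOdd_add_homotopyEven_DoStar k n)

theorem range_DoStarNeg1 (hm : (m : K) + 2 ≠ 0) :
    LinearMap.range (DoStarNeg1 K m) =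
      Submodule.span K {![(m : K) + 2, 0, 0, 0, 1, 0], ![0, 0, 1, 0, 0, 0]} := by
  ext z
  rw [Submodule.mem_span_pair]
  constructor
  · rintro ⟨y, rfl⟩
    exact ⟨_, _, (DoStarNeg1_apply y).symm⟩
  · rintro ⟨a, b, rfl⟩
    exact ⟨![a, b / ((m : K) + 2), 0, 0], by simp [DoStarNeg1_apply, mul_div_cancel₀ b hm]⟩

theorem range_DeStarNeg1 :
    LinearMap.range (DeStarNeg1 K m) =
      Submodule.span K {![0, 0, 1, 0, 0, 0], ![0, 0, 0, 1, 0, 0]} := by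
  ext z
  rw [Submodule.mem_span_pair]
  constructor
  · rintro ⟨x, rfl⟩
    exact ⟨_, _, (DeStarNeg1_apply x).symm⟩
  · rintro ⟨a, b, rfl⟩
    exact ⟨![a, b, 0, 0, 0], by simp [DeStarNeg1_apply]⟩

theorem range_DoStar :
    LinearMap.range (DoStar K m n) =
      Submodule.span K {![(m : K) + 2, 0, 0, 0, 1, 0], ![0, 0, 1, 0, 0, 0]} ⊔
        Submodule.span K {![0, 0, 0, 1, 0, 0]} := by
  ext z
  rw [← Submodule.span_union, Set.insert_union, Set.singleton_union, Submodule.mem_span_triple]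
  constructor
  · rintro ⟨y, rfl⟩
    exact ⟨_, _, _, (DoStar_apply n y).symm⟩
  · rintro ⟨a, b, c, rfl⟩
    exact ⟨![a, 0, 0, 0, b, c], by simp [DoStar_apply]⟩

theorem range_DeStar :
    LinearMap.range (DeStar K m n) =
      Submodule.span K {![0, 0, 1, 0, 0, 0], ![0, 0, 0, 1, 0, 0]} ⊔
        Submodule.span K {![0, 1, 0, 0, -((m : K) + 2), 0]} := by
  ext z
  rw [← Submodule.span_union, Set.insert_union, Set.singleton_union, Submodule.mem_span_triple]
  constructor
  · rintro ⟨x, rfl⟩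
    exact ⟨_, _, _, (DeStar_apply n x).symm⟩
  · rintro ⟨a, b, c, rfl⟩
    exact ⟨![a, b, 0, 0, 0, c], by simp [DeStar_apply]⟩

theorem ker_DeStar_eq_range_DoStarNeg1_sup (hm : (m : K) + 2 ≠ 0) :
    LinearMap.ker (DeStar K m n) =
      LinearMap.range (DoStarNeg1 K m) ⊔ Submodule.span K {![0, 0, 0, 1, 0, 0]} := by
  rw [(exact_DoStar_DeStar 0 n).linearMap_ker_eq, range_DoStar, range_DoStarNeg1 hm]

theorem ker_DoStar_eq_range_DeStarNeg1_sup :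
    LinearMap.ker (DoStar K m n) =
      LinearMap.range (DeStarNeg1 K m) ⊔
        Submodule.span K {![0, 1, 0, 0, -((m : K) + 2), 0]} := by
  rw [(exact_DeStar_DoStar 0 n).linearMap_ker_eq, range_DeStar, range_DeStarNeg1]

theorem E4_notMem_range_DoStarNeg1 :
    ![0, 0, 0, 1, 0, 0] ∉ LinearMap.range (DoStarNeg1 K m) := by
  rintro ⟨y, hy⟩
  simpa [DoStarNeg1_apply] using congr_fun hy 3

theorem O2_sub_O5_notMem_range_DeStarNeg1 :
    ![0, 1, 0, 0, -((m : K) + 2), 0] ∉ LinearMap.range (DeStarNeg1 K m) := by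
  rintro ⟨x, hx⟩
  simpa [DeStarNeg1_apply] using congr_fun hx 1

end Coboundary

theorem dStar_cohomology_general (K : Type*) [Field K] (m : ℕ) (hm : (m : K) + 2 ≠ 0) :
    (∀ n : ℕ, m < n →
      LinearMap.ker (DeStar K m n) = LinearMap.range (DoStar K m (n - m - 1)) ∧
      LinearMap.ker (DoStar K m n) = LinearMap.range (DeStar K m (n - m - 1))) ∧
    (LinearMap.range (DoStarNeg1 K m) =
      Submodule.span K {(![(m : K) + 2, 0, 0, 0, 1, 0] : Fin 6 → K),
        ![0, 0, 1, 0, 0, 0]}) ∧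
    (LinearMap.ker (DeStar K m m) =
      LinearMap.range (DoStarNeg1 K m) ⊔
        Submodule.span K {(![0, 0, 0, 1, 0, 0] : Fin 6 → K)}) ∧
    ((![0, 0, 0, 1, 0, 0] : Fin 6 → K) ∉ LinearMap.range (DoStarNeg1 K m)) ∧
    (LinearMap.range (DeStarNeg1 K m) =
      Submodule.span K {(![0, 0, 1, 0, 0, 0] : Fin 6 → K),
        ![0, 0, 0, 1, 0, 0]}) ∧
    (LinearMap.ker (DoStar K m m) =
      LinearMap.range (DeStarNeg1 K m) ⊔
        Submodule.span K {(![0, 1, 0, 0, -((m : K) + 2), 0] : Fin 6 → K)}) ∧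
    ((![0, 1, 0, 0, -((m : K) + 2), 0] : Fin 6 → K) ∉
      LinearMap.range (DeStarNeg1 K m)) :=
  ⟨fun n _ => ⟨(exact_DoStar_DeStar _ n).linearMap_ker_eq,
      (exact_DeStar_DoStar _ n).linearMap_ker_eq⟩,
    range_DoStarNeg1 hm, ker_DeStar_eq_range_DoStarNeg1_sup m hm, E4_notMem_range_DoStarNeg1,
    range_DeStarNeg1, ker_DoStar_eq_range_DeStarNeg1_sup m, O2_sub_O5_notMem_range_DeStarNeg1⟩

/-- For `d_*`: for every `n > m` the kernel of `D(n)` equals the image of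
`D(n-m-1)` on both parities, so `H^{n+2}(d_*) = 0` for `n > m`. For `n = m`: the
image under `D(-1)` of the odd part of `C(-1)` is spanned by `(m+2)E1+E5` and
`E3`, of codimension 1 in the kernel of the even part of `D(m)` with complement
spanned by `E4`; and the image under `D(-1)` of the even part of `C(-1)` is
spanned by `O3` and `O4`, of codimension 1 in the kernel of the odd part of
`D(m)` with complement spanned by `O2-(m+2)O5`. That is, `H^{m+2}(d_*)` has
dimension `1|1`, with representatives `φ^{0,1,m+1}_2` and
`ψ^{0,1,m+1}_3-(m+2)ψ^{1,1,m}_1`. -/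
theorem dStar_cohomology (K : Type*) [Field K] [CharZero K] (m : ℕ) :
    (∀ n : ℕ, m < n →
      LinearMap.ker (DeStar K m n) = LinearMap.range (DoStar K m (n - m - 1)) ∧
      LinearMap.ker (DoStar K m n) = LinearMap.range (DeStar K m (n - m - 1))) ∧
    (LinearMap.range (DoStarNeg1 K m) =
      Submodule.span K {(![(m : K) + 2, 0, 0, 0, 1, 0] : Fin 6 → K),
        ![0, 0, 1, 0, 0, 0]}) ∧
    (LinearMap.ker (DeStar K m m) =
      LinearMap.range (DoStarNeg1 K m) ⊔
        Submodule.span K {(![0, 0, 0, 1, 0, 0] : Fin 6 → K)}) ∧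
    ((![0, 0, 0, 1, 0, 0] : Fin 6 → K) ∉ LinearMap.range (DoStarNeg1 K m)) ∧
    (LinearMap.range (DeStarNeg1 K m) =
      Submodule.span K {(![0, 0, 1, 0, 0, 0] : Fin 6 → K),
        ![0, 0, 0, 1, 0, 0]}) ∧
    (LinearMap.ker (DoStar K m m) =
      LinearMap.range (DeStarNeg1 K m) ⊔
        Submodule.span K {(![0, 1, 0, 0, -((m : K) + 2), 0] : Fin 6 → K)}) ∧
    ((![0, 1, 0, 0, -((m : K) + 2), 0] : Fin 6 → K) ∉
      LinearMap.range (DeStarNeg1 K m)) := by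
  exact dStar_cohomology_general K m (by exact_mod_cast (m + 1).succ_ne_zero)

end LinfCohomology
end
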